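/- arXiv:2604.12846 — 2 statements merged into one kernel-verified Lean document; each statement's English description precedes it below -/
import Mathlib

section
/- Let (M,E,V) be a path geometry, ξ₀ ∈ Γ(E) a scale, f ∈ C^∞(M), ξ̂₀ := e^f ξ₀, and let ∇, ∇̂ be the Weyl connections associated to ξ₀ and ξ̂₀, as well as the induced connections on the line bundle L := (E ⊗ ΛⁿV*)^{2/(2n+4)}. Then for ξ ∈ Γ(E), η ∈ Γ(V), ζ := ι(𝓛(ξ,η)) and ρ ∈ Γ(L): ∇̂_ξ ρ = ∇_ξ ρ − ½ df(ξ) ρ; ∇̂_η ρ = ∇_η ρ − df(η) ρ; ∇̂_ζ ρ = ∇_ζ ρ − ½ df(ξ) df(η) ρ. -/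
/-!
The connection induced on the density bundle is determined by the trace of the Weyl connection
on `V`, so the theorem follows from the change of that connection under `ξ₀ ↦ e^f ξ₀`.

The defining conditions of a Weyl structure determine `∇` on `V` explicitly. The condition
`τ(E,V) ⊂ ι(Q)` expresses `∇_{ξ₀} η` through `[ξ₀,η]` and the lift `ζ = ι(𝓛(ξ₀,η))`; the condition
`τ(H,ι(Q)) ⊂ H` determines `𝓛(ξ₀, ∇_ψ η)` as the class of `[ψ,ζ]` modulo `H`, for `ψ ∈ H`; and
the normalization of the torsion ties the `V`-component of `[η₁,ζ₂]` to the `E`-component of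
`[ξ₀,ζ₁]`. These equations are written for the Weyl structure of `e^f ξ₀` but with respect to
the fixed section `ξ₀` (`WeylStructure.cov_E`, `WeylStructure.lie_lift`), so that `f = 0` gives
those of `ξ₀` itself. Comparing the two cases yields, with `ζᵢ = ι(𝓛(ξ₀,ηᵢ))`,

* `∇̂_{ξ₀} η = ∇_{ξ₀} η + ½ df(ξ₀) η` (`change_E`),
* `ζ̂ = ζ - df(η) ξ₀ - ½ df(ξ₀) η` (`change_lift`),
* `∇̂_{η₁} η₂ = ∇_{η₁} η₂ + df(η₂) η₁ + df(η₁) η₂` (`change_V`),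
* `∇̂_{ζ₂} η₁ = ∇_{ζ₂} η₁ + (df(ξ₀) df(η₁) - df(ζ₁)) η₂ + ½ df(ξ₀) df(η₂) η₁`
  (`change_lift_dir`).

The last formula also uses that the torsion vanishes on `V × V`. Each difference is a rank one
endomorphism of `V` plus a multiple of the identity; taking traces and adding the contribution
`-df` of `E` gives `n + 2` times the claimed change on densities (`density_of_change`).
-/

/-!
An algebraic model of the smooth calculus on a smooth manifold `M`:
`C` plays the role of the algebra `C^∞(M,ℝ)` of smooth functions and `X` plays the
role of the `C^∞(M,ℝ)`-module `𝔛(M)` of smooth vector fields, together with the Lie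
bracket of vector fields and the derivative of functions along vector fields
(i.e. a Lie–Rinehart algebra over `ℝ`).  Distributions (smooth subbundles of `TM`)
are modelled as `C`-submodules of `X`, linear connections on `TM` as operators
`X → X → X` with the usual tensoriality and Leibniz properties, and one-forms as
`C`-linear maps `X →ₗ[C] C`.
-/

open scoped TensorProduct

/-- The algebra of smooth functions together with the module of smooth vector
fields on a smooth manifold, with the Lie bracket and directional derivative. -/
structure VFCalc where
  /-- the smooth functions `C^∞(M,ℝ)` -/
  C : Type
  /-- the smooth vector fields `𝔛(M)` -/
  X : Type
  [ringC : CommRing C]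
  [algC : Algebra ℝ C]
  [grpX : AddCommGroup X]
  [modX : Module C X]
  /-- the Lie bracket of vector fields -/
  lie : X → X → X
  /-- the derivative `D ψ f = ψ · f` of a function along a vector field -/
  D : X → C → C
  lie_add_left : ∀ ψ₁ ψ₂ φ, lie (ψ₁ + ψ₂) φ = lie ψ₁ φ + lie ψ₂ φ
  lie_skew : ∀ ψ φ, lie φ ψ = - lie ψ φ
  jacobi : ∀ ψ₁ ψ₂ ψ₃, lie ψ₁ (lie ψ₂ ψ₃) = lie (lie ψ₁ ψ₂) ψ₃ + lie ψ₂ (lie ψ₁ ψ₃)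
  lie_smul_right : ∀ (f : C) (ψ φ : X), lie ψ (f • φ) = f • lie ψ φ + (D ψ f) • φ
  D_add_left : ∀ ψ₁ ψ₂ f, D (ψ₁ + ψ₂) f = D ψ₁ f + D ψ₂ f
  D_smul_left : ∀ (g : C) ψ f, D (g • ψ) f = g * D ψ f
  D_add_right : ∀ ψ f₁ f₂, D ψ (f₁ + f₂) = D ψ f₁ + D ψ f₂
  D_mul_right : ∀ ψ f₁ f₂, D ψ (f₁ * f₂) = f₁ * D ψ f₂ + f₂ * D ψ f₁
  D_algebraMap : ∀ ψ r, D ψ (algebraMap ℝ C r) = 0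

attribute [instance] VFCalc.ringC VFCalc.algC VFCalc.grpX VFCalc.modX

/-- the exterior derivative of a one-form, `dα(ψ,φ) = ψ·α(φ) − φ·α(ψ) − α([ψ,φ])` -/
def VFCalc.dform (P : VFCalc) (α : P.X →ₗ[P.C] P.C) (ψ φ : P.X) : P.C :=
  P.D ψ (α φ) - P.D φ (α ψ) - α (P.lie ψ φ)

/-- A (generalized) path geometry on a manifold `M` of dimension `2n+1`:
distributions `E, V ⊂ TM` (of rank `1` and `n`) with `E ∩ V = 0`, `V` involutive,
such that the Levi bracket induces an isomorphism `E ⊗ V ≅ Q := TM/(E ⊕ V)`. -/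
structure PathGeometry extends VFCalc where
  /-- the rank one distribution `E` -/
  E : Submodule C X
  /-- the rank `n` distribution `V` -/
  V : Submodule C X
  inf_bot : E ⊓ V = ⊥
  involutive : ∀ η₁ ∈ V, ∀ η₂ ∈ V, lie η₁ η₂ ∈ V
  /-- the Levi bracket `E ⊗ V → Q = TM/(E ⊔ V)` is an isomorphism of bundles -/
  leviIso : (↥E ⊗[C] ↥V) ≃ₗ[C] (X ⧸ (E ⊔ V))
  leviIso_apply : ∀ (ξ : ↥E) (η : ↥V),
    leviIso (ξ ⊗ₜ[C] η) = Submodule.Quotient.mk (lie (ξ : X) (η : X))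

namespace PathGeometry

variable (P : PathGeometry)

/-- the corank one distribution `H = E ⊕ V` -/
def H : Submodule P.C P.X := P.E ⊔ P.V

/-- the quotient bundle `Q = TM/H` -/
abbrev Q := P.X ⧸ P.H

/-- the quotient projection `q : TM → Q` -/
def q : P.X →ₗ[P.C] P.Q := P.H.mkQ

/-- the Levi bracket `𝓛(ψ,φ) = q([ψ,φ])` -/
def levi (ψ φ : P.X) : P.Q := P.q (P.lie ψ φ)

/-- the constant function `½` -/
noncomputable def half : P.C := algebraMap ℝ P.C (1/2)

/-- A (local) scale: a nowhere vanishing smooth section `ξ₀` of the line bundle `E`,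
i.e. a trivialization of `E`, modelled as a basis of `E` as free rank one module. -/
structure IsScale (ξ₀ : P.X) : Prop where
  mem : ξ₀ ∈ P.E
  span : ∀ ξ ∈ P.E, ∃ f : P.C, ξ = f • ξ₀
  basis : ∀ f : P.C, f • ξ₀ = 0 → f = 0

end PathGeometry

/-- A linear connection on `TM`. -/
structure Conn (P : VFCalc) where
  /-- the covariant derivative `cov ψ φ = ∇_ψ φ` -/
  cov : P.X → P.X → P.X
  add_left : ∀ ψ₁ ψ₂ φ, cov (ψ₁ + ψ₂) φ = cov ψ₁ φ + cov ψ₂ φ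
  smul_left : ∀ (f : P.C) ψ φ, cov (f • ψ) φ = f • cov ψ φ
  add_right : ∀ ψ φ₁ φ₂, cov ψ (φ₁ + φ₂) = cov ψ φ₁ + cov ψ φ₂
  leibniz : ∀ (f : P.C) ψ φ, cov ψ (f • φ) = f • cov ψ φ + (P.D ψ f) • φ

namespace Conn

variable {P : VFCalc} (cn : Conn P)

/-- the torsion `τ(ψ₁,ψ₂) = ∇_{ψ₁}ψ₂ − ∇_{ψ₂}ψ₁ − [ψ₁,ψ₂]` -/
def torsion (ψ₁ ψ₂ : P.X) : P.X := cn.cov ψ₁ ψ₂ - cn.cov ψ₂ ψ₁ - P.lie ψ₁ ψ₂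

/-- the curvature `R(ψ₁,ψ₂)(ψ₃) = ∇_{ψ₁}∇_{ψ₂}ψ₃ − ∇_{ψ₂}∇_{ψ₁}ψ₃ − ∇_{[ψ₁,ψ₂]}ψ₃` -/
def curv (ψ₁ ψ₂ ψ₃ : P.X) : P.X :=
  cn.cov ψ₁ (cn.cov ψ₂ ψ₃) - cn.cov ψ₂ (cn.cov ψ₁ ψ₃) - cn.cov (P.lie ψ₁ ψ₂) ψ₃

end Conn

/-- The Weyl structure associated to a scale `ξ₀`: a linear connection `∇` on `TM`
together with a decomposition `TM = E ⊕ V ⊕ ι(Q)` (encoded by the splitting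
`ι : Q → TM` of `q`) such that `E`, `V`, `ι(Q)` are parallel, `∇ξ₀ = 0`,
`ι ∘ 𝓛 : E ⊗ V → ι(Q)` is parallel, the torsion satisfies `τ(E,V) ⊂ ι(Q)`,
`τ(H,ι(Q)) ⊂ H` and the normalization
`𝓛(τ(ξ₀,ζ₁),η₂) = 2𝓛(ξ₀,τ(η₁,ζ₂))` for `ζᵢ = ι(𝓛(ξ₀,ηᵢ))`. -/
structure WeylStructure (P : PathGeometry) (ξ₀ : P.X) where
  conn : Conn P.toVFCalc
  ι : P.Q →ₗ[P.C] P.X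
  q_ι : ∀ w, P.q (ι w) = w
  parE : ∀ ψ : P.X, ∀ ξ ∈ P.E, conn.cov ψ ξ ∈ P.E
  parV : ∀ ψ : P.X, ∀ η ∈ P.V, conn.cov ψ η ∈ P.V
  parQ : ∀ (ψ : P.X) (w : P.Q), conn.cov ψ (ι w) ∈ LinearMap.range ι
  parScale : ∀ ψ : P.X, conn.cov ψ ξ₀ = 0
  parLevi : ∀ ψ : P.X, ∀ ξ ∈ P.E, ∀ η ∈ P.V,
    conn.cov ψ (ι (P.levi ξ η)) = ι (P.levi (conn.cov ψ ξ) η) + ι (P.levi ξ (conn.cov ψ η))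
  torsEV : ∀ ξ ∈ P.E, ∀ η ∈ P.V, conn.torsion ξ η ∈ LinearMap.range ι
  torsHQ : ∀ ψ ∈ P.H, ∀ w : P.Q, conn.torsion ψ (ι w) ∈ P.H
  norm : ∀ η₁ ∈ P.V, ∀ η₂ ∈ P.V,
    P.levi (conn.torsion ξ₀ (ι (P.levi ξ₀ η₁))) η₂
      = (2 : P.C) • P.levi ξ₀ (conn.torsion η₁ (ι (P.levi ξ₀ η₂)))

/-- A linear connection on an (abstract) vector bundle, modelled as a `C`-module `Lb`
of sections: an operator `𝔛(M) × Γ(Lb) → Γ(Lb)` which is tensorial in the first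
variable and satisfies the Leibniz rule in the second. -/
structure ModConn (P : VFCalc) (Lb : Type) [AddCommGroup Lb] [Module P.C Lb] where
  cov : P.X → Lb → Lb
  add_left : ∀ ψ₁ ψ₂ ρ, cov (ψ₁ + ψ₂) ρ = cov ψ₁ ρ + cov ψ₂ ρ
  smul_left : ∀ (f : P.C) ψ ρ, cov (f • ψ) ρ = f • cov ψ ρ
  add_right : ∀ ψ ρ₁ ρ₂, cov ψ (ρ₁ + ρ₂) = cov ψ ρ₁ + cov ψ ρ₂
  leibniz : ∀ (f : P.C) ψ ρ, cov ψ (f • ρ) = f • cov ψ ρ + (P.D ψ f) • ρ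

/-- The covariant derivative on the subbundle `V` induced by a Weyl structure. -/
def WeylStructure.covV {P : PathGeometry} {ξ₀ : P.X} (W : WeylStructure P ξ₀)
    (ψ : P.X) (η : ↥P.V) : ↥P.V :=
  ⟨W.conn.cov ψ (η : P.X), W.parV ψ (η : P.X) η.2⟩


namespace PathGeometry

/-! ### Elementary calculus -/

section Calculus

variable (P : PathGeometry)

theorem two_half : (2 : P.C) * P.half = 1 := by
  have : (2 : P.C) = algebraMap ℝ P.C 2 := (map_ofNat _ 2).symm
  rw [this, half, ← map_mul]; norm_num

theorem lie_add_right (ψ φ₁ φ₂ : P.X) :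
    P.lie ψ (φ₁ + φ₂) = P.lie ψ φ₁ + P.lie ψ φ₂ := by
  rw [P.lie_skew (φ₁ + φ₂) ψ, P.lie_add_left, P.lie_skew φ₁ ψ, P.lie_skew φ₂ ψ]; abel

theorem lie_smul_left (g : P.C) (ψ φ : P.X) :
    P.lie (g • ψ) φ = g • P.lie ψ φ - P.D φ g • ψ := by
  rw [P.lie_skew φ (g • ψ), P.lie_smul_right, P.lie_skew φ ψ]; module

theorem lie_neg_right (ψ φ : P.X) : P.lie ψ (-φ) = - P.lie ψ φ := by
  have h0 : P.lie ψ 0 = 0 := by simpa using P.lie_add_right ψ 0 0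
  have := P.lie_add_right ψ φ (-φ)
  rw [add_neg_cancel, h0] at this
  exact (neg_eq_of_add_eq_zero_right this.symm).symm

theorem lie_sub_right (ψ φ₁ φ₂ : P.X) :
    P.lie ψ (φ₁ - φ₂) = P.lie ψ φ₁ - P.lie ψ φ₂ := by
  rw [sub_eq_add_neg, lie_add_right, lie_neg_right, sub_eq_add_neg]

theorem lie_self (ψ : P.X) : P.lie ψ ψ = 0 := by
  have h := P.lie_skew ψ ψ
  have h2 : (2 : P.C) • P.lie ψ ψ = 0 := by linear_combination (norm := module) h
  have := congrArg (fun x => P.half • x) h2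
  simpa [smul_smul, mul_comm P.half, P.two_half] using this

theorem D_zero (ψ : P.X) : P.D ψ 0 = 0 := by
  simpa using P.D_add_right ψ 0 0

theorem D_one (ψ : P.X) : P.D ψ 1 = 0 := by
  simpa using P.D_algebraMap ψ 1

theorem D_sub_left (ψ φ : P.X) (g : P.C) : P.D (ψ - φ) g = P.D ψ g - P.D φ g := by
  have h := P.D_add_left (ψ - φ) φ g
  rw [sub_add_cancel] at h
  rw [h]; ring

theorem D_half_mul (ψ : P.X) (g : P.C) : P.D ψ (P.half * g) = P.half * P.D ψ g := by
  rw [P.D_mul_right, half, P.D_algebraMap, mul_zero, add_zero]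

theorem cov_sub_left (cn : Conn P.toVFCalc) (ψ₁ ψ₂ φ : P.X) :
    cn.cov (ψ₁ - ψ₂) φ = cn.cov ψ₁ φ - cn.cov ψ₂ φ := by
  have h := cn.add_left (ψ₁ - ψ₂) ψ₂ φ
  rw [sub_add_cancel] at h
  rw [h, add_sub_cancel_right]

variable {P} {ξ₀ : P.X}

/-- The Lie bracket acts on functions as the commutator. This follows from the Jacobi identity
for `ψ, φ, g • ξ₀`, since a scale `ξ₀` has zero annihilator. -/
theorem IsScale.D_lie (hξ₀ : P.IsScale ξ₀) (ψ φ : P.X) (g : P.C) :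
    P.D (P.lie ψ φ) g = P.D ψ (P.D φ g) - P.D φ (P.D ψ g) := by
  have h := P.jacobi ψ φ (g • ξ₀)
  have h' := P.jacobi ψ φ ξ₀
  simp only [P.lie_smul_right, P.lie_add_right] at h
  have := hξ₀.basis (P.D (P.lie ψ φ) g - (P.D ψ (P.D φ g) - P.D φ (P.D ψ g))) (by
    linear_combination (norm := module) g • h' - h)
  exact sub_eq_zero.1 this

end Calculus

/-! ### The Levi bracket -/

section Levi

variable {P : PathGeometry} {ξ₀ : P.X}

theorem q_E {ξ : P.X} (h : ξ ∈ P.E) : P.q ξ = 0 :=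
  (Submodule.Quotient.mk_eq_zero _).2 (Submodule.mem_sup_left h)

theorem q_V {η : P.X} (h : η ∈ P.V) : P.q η = 0 :=
  (Submodule.Quotient.mk_eq_zero _).2 (Submodule.mem_sup_right h)

theorem q_H {ψ : P.X} (h : ψ ∈ P.H) : P.q ψ = 0 :=
  (Submodule.Quotient.mk_eq_zero _).2 h

theorem levi_smul_left {ξ : P.X} (h : ξ ∈ P.E) (g : P.C) (η : P.X) :
    P.levi (g • ξ) η = g • P.levi ξ η := by
  simp [levi, P.lie_smul_left, q_E h]

theorem levi_add (ξ η₁ η₂ : P.X) : P.levi ξ (η₁ + η₂) = P.levi ξ η₁ + P.levi ξ η₂ := by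
  simp [levi, P.lie_add_right]

theorem levi_smul {η : P.X} (h : η ∈ P.V) (g : P.C) (ξ : P.X) :
    P.levi ξ (g • η) = g • P.levi ξ η := by
  simp [levi, P.lie_smul_right, q_V h]

theorem levi_VV {η₁ η₂ : P.X} (h₁ : η₁ ∈ P.V) (h₂ : η₂ ∈ P.V) : P.levi η₁ η₂ = 0 :=
  q_V (P.involutive _ h₁ _ h₂)

theorem levi_sub (ξ η₁ η₂ : P.X) : P.levi ξ (η₁ - η₂) = P.levi ξ η₁ - P.levi ξ η₂ := by
  simp [levi, P.lie_sub_right]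

/-- A scale trivializes `E`, so the Levi isomorphism makes `𝓛(ξ₀, ·)` injective on `V`. -/
theorem IsScale.levi_inj (hξ₀ : P.IsScale ξ₀) {η₁ η₂ : P.X} (h₁ : η₁ ∈ P.V) (h₂ : η₂ ∈ P.V)
    (h : P.levi ξ₀ η₁ = P.levi ξ₀ η₂) : η₁ = η₂ := by
  let x : P.E := ⟨ξ₀, hξ₀.mem⟩
  have hbij : Function.Bijective (LinearMap.toSpanSingleton P.C P.E x) := by
    constructor
    · rw [injective_iff_map_eq_zero]
      intro g hg
      exact hξ₀.basis g (by simpa [x] using congrArg Subtype.val hg)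
    · rintro ⟨y, hy⟩
      obtain ⟨g, rfl⟩ := hξ₀.span y hy
      exact ⟨g, by ext; simp [x]⟩
  let e := LinearEquiv.ofBijective _ hbij
  have he : e.symm x = 1 := by
    rw [LinearEquiv.symm_apply_eq]; simp [e]
  have key : x ⊗ₜ[P.C] (⟨η₁, h₁⟩ : P.V) = x ⊗ₜ[P.C] (⟨η₂, h₂⟩ : P.V) := by
    apply P.leviIso.injective
    rw [P.leviIso_apply, P.leviIso_apply]
    exact h
  have := congrArg (fun t => TensorProduct.lid P.C P.V
    (LinearMap.rTensor P.V (e.symm : P.E →ₗ[P.C] P.C) t)) key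
  simpa [he] using this

/-- `E ∩ V = 0`, with the coefficient of the `E`-component read off. -/
theorem IsScale.disjoint (hξ₀ : P.IsScale ξ₀) {a : P.C} {b : P.X}
    (hb : b ∈ P.V) (h : b = a • ξ₀) : a = 0 ∧ b = 0 := by
  have hb0 : b = 0 := by
    have : b ∈ P.E ⊓ P.V := ⟨h ▸ P.E.smul_mem _ hξ₀.mem, hb⟩
    simpa [P.inf_bot] using this
  exact ⟨hξ₀.basis a (h.symm.trans hb0), hb0⟩

end Levi

end PathGeometry

/-! ### Weyl connections seen from a fixed scale -/

section Weyl

open PathGeometry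

variable {P : PathGeometry} {ξ₀ ξ₁ : P.X} {u f : P.C}

/-- The lift `ζ = ι(𝓛(ξ₀,η))` of `η ∈ V` for a reference section `ξ₀` of `E`, which need not be
the scale of the Weyl structure. -/
def WeylStructure.lift (W : WeylStructure P ξ₁) (ξ₀ η : P.X) : P.X := W.ι (P.levi ξ₀ η)

theorem WeylStructure.q_lift (W : WeylStructure P ξ₁) (ξ₀ η : P.X) :
    P.q (W.lift ξ₀ η) = P.levi ξ₀ η := W.q_ι _

/-- The connection in the direction of `ξ₀`, for the Weyl structure of `e^f ξ₀`: the condition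
`τ(E,V) ⊂ ι(Q)` determines it. -/
theorem WeylStructure.cov_E (hξ₀ : P.IsScale ξ₀) (hu : IsUnit u)
    (hDu : ∀ ψ : P.X, P.D ψ u = u * P.D ψ f) (h₁ : ξ₁ = u • ξ₀) (W : WeylStructure P ξ₁)
    {η : P.X} (hη : η ∈ P.V) :
    W.conn.cov ξ₀ η = P.lie ξ₀ η - P.D η f • ξ₀ - W.lift ξ₀ η := by
  subst h₁
  have hE : u • ξ₀ ∈ P.E := P.E.smul_mem _ hξ₀.mem
  obtain ⟨w, hw⟩ := W.torsEV _ hE η hη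
  have hq := congrArg P.q hw
  rw [W.q_ι] at hq
  unfold Conn.torsion at hw hq
  rw [W.parScale, sub_zero] at hw hq
  rw [map_sub, q_V (W.parV _ _ hη)] at hq
  have hw' : w = -(u • P.levi ξ₀ η) := by
    rw [hq, ← levi_smul_left hξ₀.mem, levi]; abel
  rw [hw', W.conn.smul_left, P.lie_smul_left, hDu, map_neg, map_smul] at hw
  rw [← hu.smul_left_cancel]
  unfold WeylStructure.lift
  linear_combination (norm := module) -hw

/-- The remaining structure equations for the Weyl structure of `e^f ξ₀`. The coefficient `s` is
the `E`-component of `τ(ξ₀,ζ₁)`, and the normalization forces the `V`-component of `τ(η₁,ζ₂)` to be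
`½ s η₂`. -/
theorem WeylStructure.lie_lift (hξ₀ : P.IsScale ξ₀) (hu : IsUnit u)
    (hDu : ∀ ψ : P.X, P.D ψ u = u * P.D ψ f) (h₁ : ξ₁ = u • ξ₀) (W : WeylStructure P ξ₁)
    {η₁ : P.X} (hη₁ : η₁ ∈ P.V) :
    ∃ s : P.C,
      (∃ v ∈ P.V, P.lie ξ₀ (W.lift ξ₀ η₁) + P.D ξ₀ f • W.lift ξ₀ η₁
          - P.D (W.lift ξ₀ η₁) f • ξ₀
        = W.lift ξ₀ (W.conn.cov ξ₀ η₁) - s • ξ₀ - v) ∧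
      ∀ η₂ ∈ P.V, ∃ t : P.C, P.lie η₁ (W.lift ξ₀ η₂) + P.D η₁ f • W.lift ξ₀ η₂
        = W.lift ξ₀ (W.conn.cov η₁ η₂) - W.conn.cov (W.lift ξ₀ η₂) η₁ - t • ξ₀
          - (P.half * s) • η₂ := by
  subst h₁
  have hE : u • ξ₀ ∈ P.E := P.E.smul_mem _ hξ₀.mem
  have hz : ∀ η, W.ι (P.levi (u • ξ₀) η) = u • W.lift ξ₀ η := by
    intro η; rw [levi_smul_left hξ₀.mem, map_smul]; rfl
  have hcov : ∀ ψ, ∀ η ∈ P.V, W.conn.cov ψ (u • W.lift ξ₀ η)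
      = u • W.lift ξ₀ (W.conn.cov ψ η) := by
    intro ψ η hη
    have := W.parLevi ψ _ hE η hη
    rw [hz, hz, W.parScale] at this
    rw [this, ← zero_smul P.C ξ₀, levi_smul_left hξ₀.mem]
    simp
  obtain ⟨v', hu'⟩ := hu
  set ui : P.C := (↑v'⁻¹ : P.C) with hui
  have huui : u * ui = 1 := by rw [← hu', hui]; exact v'.mul_inv
  have t1 := W.torsHQ _ (Submodule.mem_sup_left hE) (P.levi (u • ξ₀) η₁)
  obtain ⟨e, he, v, hv, hev⟩ := Submodule.mem_sup.1 t1
  obtain ⟨s, rfl⟩ := hξ₀.span e he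
  have hT := hev
  rw [Conn.torsion, hz, hcov _ _ hη₁, W.parScale, P.lie_smul_left, P.lie_smul_right, hDu,
    P.D_smul_left, hDu, W.conn.smul_left] at hT
  have hl : ∀ a b : P.X, W.lift ξ₀ (a - b) = W.lift ξ₀ a - W.lift ξ₀ b := by
    intro a b; simp [WeylStructure.lift, levi_sub]
  have hls : W.lift ξ₀ (u • W.conn.cov ξ₀ η₁) = u • W.lift ξ₀ (W.conn.cov ξ₀ η₁) := by
    simp [WeylStructure.lift, levi_smul (W.parV _ _ hη₁)]
  rw [hls] at hT
  -- Dividing by `u²` passes from the scale `u • ξ₀` to the reference section `ξ₀`.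
  refine ⟨ui * ui * s, ⟨(ui * ui) • v, P.V.smul_mem _ hv, ?_⟩, ?_⟩
  · have h2 : u * u * (ui * ui) = 1 := by linear_combination (u * ui + 1) * huui
    have key : (u * u) • (P.lie ξ₀ (W.lift ξ₀ η₁) + P.D ξ₀ f • W.lift ξ₀ η₁
          - P.D (W.lift ξ₀ η₁) f • ξ₀) = (u * u) • W.lift ξ₀ (W.conn.cov ξ₀ η₁) - s • ξ₀ - v := by
      linear_combination (norm := module) hT
    have := congrArg (fun x => (ui * ui) • x) key
    simp only [smul_sub, smul_add, smul_smul] at this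
    have h3 : ui * ui * (u * u) = 1 := by rw [mul_comm]; exact h2
    simp only [← mul_assoc (ui * ui) (u * u)] at this
    simp only [h3, one_mul, one_smul] at this
    linear_combination (norm := module) this
  · intro η₂ hη₂
    have hN := W.norm η₁ hη₁ η₂ hη₂
    have t2 := W.torsHQ _ (Submodule.mem_sup_right hη₁) (P.levi (u • ξ₀) η₂)
    obtain ⟨e, he, v₂, hv₂, hev₂⟩ := Submodule.mem_sup.1 t2
    obtain ⟨t, rfl⟩ := hξ₀.span e he
    rw [← hev, ← hev₂] at hN
    have hL1 : P.levi (s • ξ₀ + v) η₂ = s • P.levi ξ₀ η₂ := by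
      rw [← levi_smul_left hξ₀.mem]
      simp only [levi, P.lie_add_left, map_add]
      rw [q_V (P.involutive _ hv _ hη₂), add_zero]
    have hL2 : P.levi (u • ξ₀) (t • ξ₀ + v₂) = u • P.levi ξ₀ v₂ := by
      rw [levi_smul_left hξ₀.mem, levi_add]
      simp [levi, P.lie_smul_right, P.lie_self, q_E hξ₀.mem]
    rw [hL1, hL2] at hN
    have hv₂' : (2 * u) • v₂ = s • η₂ := by
      refine hξ₀.levi_inj (P.V.smul_mem _ hv₂) (P.V.smul_mem _ hη₂) ?_
      rw [levi_smul hv₂, levi_smul hη₂, hN, smul_smul]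
    have hvv : v₂ = (P.half * ui * s) • η₂ := by
      have h3 : (P.half * ui) * (2 * u) = 1 := by
        linear_combination (2 * P.half) * huui + P.two_half
      rw [mul_smul, ← hv₂', smul_smul, h3, one_smul]
    have hT2 := hev₂
    rw [Conn.torsion, hz, hcov _ _ hη₂, P.lie_smul_right, hDu, W.conn.smul_left, hvv] at hT2
    refine ⟨ui * t, ?_⟩
    have key : u • (P.lie η₁ (W.lift ξ₀ η₂) + P.D η₁ f • W.lift ξ₀ η₂)
        = u • (W.lift ξ₀ (W.conn.cov η₁ η₂) - W.conn.cov (W.lift ξ₀ η₂) η₁) - t • ξ₀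
          - (P.half * ui * s) • η₂ := by
      linear_combination (norm := module) hT2
    have := congrArg (fun x => ui • x) key
    have h3 : ui * u = 1 := by rw [mul_comm]; exact huui
    simp only [smul_sub, smul_add, smul_smul, ← mul_assoc, h3, one_mul, one_smul] at this
    linear_combination (norm := module) this

/-- The connection along `V`, up to the injection `𝓛(ξ₀, ·)`. -/
theorem WeylStructure.levi_cov_V (hξ₀ : P.IsScale ξ₀) (hu : IsUnit u)
    (hDu : ∀ ψ : P.X, P.D ψ u = u * P.D ψ f) (h₁ : ξ₁ = u • ξ₀) (W : WeylStructure P ξ₁)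
    {η₁ η₂ : P.X} (hη₁ : η₁ ∈ P.V) (hη₂ : η₂ ∈ P.V) :
    P.levi ξ₀ (W.conn.cov η₁ η₂)
      = P.q (P.lie η₁ (W.lift ξ₀ η₂)) + P.D η₁ f • P.levi ξ₀ η₂ := by
  obtain ⟨s, -, h⟩ := W.lie_lift hξ₀ hu hDu h₁ hη₁
  obtain ⟨t, ht⟩ := h η₂ hη₂
  have := congrArg P.q ht
  simp only [map_sub, map_add, map_smul, W.q_lift, q_V (W.parV _ _ hη₁), q_E hξ₀.mem,
    q_V hη₂, smul_zero, sub_zero] at this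
  exact this.symm

/-- The torsion of a Weyl connection vanishes on `V × V`; this is the Jacobi identity for
`ξ₀, η₁, η₂` modulo `H`. -/
theorem WeylStructure.torsion_VV (hξ₀ : P.IsScale ξ₀) (W : WeylStructure P ξ₀)
    {η₁ η₂ : P.X} (hη₁ : η₁ ∈ P.V) (hη₂ : η₂ ∈ P.V) :
    W.conn.cov η₁ η₂ - W.conn.cov η₂ η₁ = P.lie η₁ η₂ := by
  have hDu : ∀ ψ : P.X, P.D ψ 1 = 1 * P.D ψ 0 := by intro ψ; rw [P.D_one, P.D_zero]; ring
  have h1 := (one_smul P.C ξ₀).symm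
  refine hξ₀.levi_inj (P.V.sub_mem (W.parV _ _ hη₂) (W.parV _ _ hη₁))
    (P.involutive _ hη₁ _ hη₂) ?_
  have key : ∀ a ∈ P.V, ∀ b ∈ P.V,
      P.levi ξ₀ (W.conn.cov a b) = P.q (P.lie a (P.lie ξ₀ b)) := by
    intro a ha b hb
    rw [W.levi_cov_V hξ₀ isUnit_one hDu h1 ha hb, P.D_zero, zero_smul, add_zero]
    have hc := W.cov_E hξ₀ isUnit_one hDu h1 hb
    rw [P.D_zero, zero_smul, sub_zero] at hc
    rw [show W.lift ξ₀ b = P.lie ξ₀ b - W.conn.cov ξ₀ b by rw [hc]; abel, P.lie_sub_right,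
      map_sub, q_V (P.involutive _ ha _ (W.parV _ _ hb)), sub_zero]
  rw [levi_sub, key _ hη₁ _ hη₂, key _ hη₂ _ hη₁, levi, ← map_sub,
    P.jacobi ξ₀ η₁ η₂, P.lie_skew (P.lie ξ₀ η₁) η₂]
  congr 1; abel

/-! ### Change of scale -/

theorem change_E (hξ₀ : P.IsScale ξ₀) (hu : IsUnit u)
    (hDu : ∀ ψ : P.X, P.D ψ u = u * P.D ψ f)
    (W : WeylStructure P ξ₀) (W' : WeylStructure P (u • ξ₀)) {η : P.X} (hη : η ∈ P.V) :
    W'.conn.cov ξ₀ η = W.conn.cov ξ₀ η + (P.half * P.D ξ₀ f) • η := by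
  have hDu1 : ∀ ψ : P.X, P.D ψ 1 = 1 * P.D ψ 0 := by intro ψ; rw [P.D_one, P.D_zero]; ring
  have h1 := (one_smul P.C ξ₀).symm
  have hc := W.cov_E hξ₀ isUnit_one hDu1 h1 hη
  have hc' := W'.cov_E hξ₀ hu hDu rfl hη
  have hV := W.parV ξ₀ _ hη
  have hV' := W'.parV ξ₀ _ hη
  have hB := P.V.sub_mem hV' hV
  obtain ⟨s, ⟨v, hv, h⟩, -⟩ := W.lie_lift hξ₀ isUnit_one hDu1 h1 hη
  obtain ⟨s', ⟨v', hv', h'⟩, -⟩ := W'.lie_lift hξ₀ hu hDu rfl hη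
  simp only [P.D_zero, zero_smul, add_zero, sub_zero] at h hc
  have hz : W'.lift ξ₀ η = W.lift ξ₀ η - P.D η f • ξ₀
      - (W'.conn.cov ξ₀ η - W.conn.cov ξ₀ η) := by rw [hc, hc']; abel
  have hq := congrArg P.q h
  have hq' := congrArg P.q h'
  simp only [map_sub, map_add, map_smul, WeylStructure.q_lift, q_V hv, q_V hv', q_E hξ₀.mem,
    smul_zero, sub_zero] at hq hq'
  rw [hz, P.lie_sub_right, P.lie_sub_right, P.lie_smul_right, P.lie_self] at hq'
  simp only [map_sub, map_smul, smul_zero, zero_add, q_E hξ₀.mem, sub_zero] at hq'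
  have h2 : (2 : P.C) • (W'.conn.cov ξ₀ η - W.conn.cov ξ₀ η) = P.D ξ₀ f • η := by
    refine hξ₀.levi_inj (P.V.smul_mem _ hB) (P.V.smul_mem _ hη) ?_
    rw [levi_smul hB, levi_smul hη]
    have e1 : P.q (P.lie ξ₀ (W'.conn.cov ξ₀ η - W.conn.cov ξ₀ η))
      = P.levi ξ₀ (W'.conn.cov ξ₀ η - W.conn.cov ξ₀ η) := rfl
    rw [e1] at hq'
    rw [levi_sub] at hq' ⊢
    linear_combination (norm := module) -hq' + hq
  have h3 := congrArg (fun x => P.half • x) h2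
  simp only [smul_smul, mul_comm P.half 2, P.two_half, one_smul] at h3
  linear_combination (norm := module) h3

/-- The change of the complement `ι(Q)` under a change of scale. -/
theorem change_lift (hξ₀ : P.IsScale ξ₀) (hu : IsUnit u)
    (hDu : ∀ ψ : P.X, P.D ψ u = u * P.D ψ f)
    (W : WeylStructure P ξ₀) (W' : WeylStructure P (u • ξ₀)) {η : P.X} (hη : η ∈ P.V) :
    W'.lift ξ₀ η = W.lift ξ₀ η - P.D η f • ξ₀ - (P.half * P.D ξ₀ f) • η := by
  have hDu1 : ∀ ψ : P.X, P.D ψ 1 = 1 * P.D ψ 0 := by intro ψ; rw [P.D_one, P.D_zero]; ring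
  have h1 := (one_smul P.C ξ₀).symm
  have hc := W.cov_E hξ₀ isUnit_one hDu1 h1 hη
  have hc' := W'.cov_E hξ₀ hu hDu rfl hη
  rw [P.D_zero, zero_smul, sub_zero] at hc
  rw [change_E hξ₀ hu hDu W W' hη] at hc'
  linear_combination (norm := module) hc' - hc

theorem change_V (hξ₀ : P.IsScale ξ₀) (hu : IsUnit u)
    (hDu : ∀ ψ : P.X, P.D ψ u = u * P.D ψ f)
    (W : WeylStructure P ξ₀) (W' : WeylStructure P (u • ξ₀))
    {η₁ η₂ : P.X} (hη₁ : η₁ ∈ P.V) (hη₂ : η₂ ∈ P.V) :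
    W'.conn.cov η₁ η₂ = W.conn.cov η₁ η₂ + P.D η₂ f • η₁ + P.D η₁ f • η₂ := by
  have hDu1 : ∀ ψ : P.X, P.D ψ 1 = 1 * P.D ψ 0 := by intro ψ; rw [P.D_one, P.D_zero]; ring
  have h1 := (one_smul P.C ξ₀).symm
  have hV := W.parV η₁ _ hη₂
  have e1 := P.V.smul_mem (P.D η₂ f) hη₁
  have e2 := P.V.smul_mem (P.D η₁ f) hη₂
  refine hξ₀.levi_inj (W'.parV _ _ hη₂) (P.V.add_mem (P.V.add_mem hV e1) e2) ?_
  rw [W'.levi_cov_V hξ₀ hu hDu rfl hη₁ hη₂, levi_add, levi_add,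
    W.levi_cov_V hξ₀ isUnit_one hDu1 h1 hη₁ hη₂, levi_smul hη₁, levi_smul hη₂,
    change_lift hξ₀ hu hDu W W' hη₂, P.D_zero, P.lie_sub_right, P.lie_sub_right,
    P.lie_smul_right, P.lie_smul_right, P.lie_skew ξ₀ η₁]
  simp only [map_sub, map_add, map_smul, map_neg, q_E hξ₀.mem, q_V hη₂,
    q_V (P.involutive _ hη₁ _ hη₂), levi]
  module

/-- The change of the connection on `V` along the lift `ζ₂` of `η₂`, taken with respect to the
original splitting. -/
theorem change_lift_dir (hξ₀ : P.IsScale ξ₀) (hu : IsUnit u)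
    (hDu : ∀ ψ : P.X, P.D ψ u = u * P.D ψ f)
    (W : WeylStructure P ξ₀) (W' : WeylStructure P (u • ξ₀))
    {η₁ η₂ : P.X} (hη₁ : η₁ ∈ P.V) (hη₂ : η₂ ∈ P.V) :
    W'.conn.cov (W.lift ξ₀ η₂) η₁ = W.conn.cov (W.lift ξ₀ η₂) η₁
      + (P.D ξ₀ f * P.D η₁ f - P.D (W.lift ξ₀ η₁) f) • η₂
      + (P.half * P.D ξ₀ f * P.D η₂ f) • η₁ := by
  have hDu1 : ∀ ψ : P.X, P.D ψ 1 = 1 * P.D ψ 0 := by intro ψ; rw [P.D_one, P.D_zero]; ring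
  have h1 := (one_smul P.C ξ₀).symm
  have hh := P.two_half
  obtain ⟨s, ⟨v, hv, h⟩, H⟩ := W.lie_lift hξ₀ isUnit_one hDu1 h1 hη₁
  obtain ⟨s', ⟨v', hv', h'⟩, H'⟩ := W'.lie_lift hξ₀ hu hDu rfl hη₁
  obtain ⟨t, ht⟩ := H η₂ hη₂
  obtain ⟨t', ht'⟩ := H' η₂ hη₂
  have hc := W.cov_E hξ₀ isUnit_one hDu1 h1 hη₁
  simp only [P.D_zero, zero_smul, add_zero, sub_zero] at h ht hc
  have hz := fun η (hη : η ∈ P.V) => change_lift hξ₀ hu hDu W W' hη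
  have hE := W.parV ξ₀ _ hη₁
  have hV := W.parV η₁ _ hη₂
  have hV₂ := W.parV η₂ _ hη₁
  have hZ := W.parV (W.lift ξ₀ η₂) _ hη₁
  have hZ' := W'.parV (W.lift ξ₀ η₂) _ hη₁
  have hlie : P.lie ξ₀ η₁ = W.conn.cov ξ₀ η₁ + W.lift ξ₀ η₁ := by rw [hc]; abel
  have htor := W.torsion_VV hξ₀ hη₁ hη₂
  have hladd : ∀ a b, W.lift ξ₀ (a + b) = W.lift ξ₀ a + W.lift ξ₀ b := by
    intro a b; simp [WeylStructure.lift, levi_add]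
  have hlsm : ∀ (g : P.C), ∀ a ∈ P.V, W.lift ξ₀ (g • a) = g • W.lift ξ₀ a := by
    intro g a ha; simp [WeylStructure.lift, levi_smul ha]
  -- Comparing `E`-components of the two expressions for `[ξ₀, ζ₁]` determines `s'`.
  have hs : s' = s + P.D η₁ (P.D ξ₀ f) + 2 * P.D (W.lift ξ₀ η₁) f - P.D ξ₀ f * P.D η₁ f := by
    have hD : P.D (W.conn.cov ξ₀ η₁) f + P.D (W.lift ξ₀ η₁) f
        = P.D ξ₀ (P.D η₁ f) - P.D η₁ (P.D ξ₀ f) := by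
      rw [← hξ₀.D_lie, hlie, P.D_add_left]
    rw [hz _ (W'.parV _ _ hη₁), hz _ hη₁, change_E hξ₀ hu hDu W W' hη₁, hladd, hlsm _ _ hη₁,
      P.lie_sub_right, P.lie_sub_right, P.lie_smul_right, P.lie_smul_right, P.lie_self, h,
      hlie] at h'
    simp only [P.D_sub_left, P.D_add_left, P.D_smul_left, P.D_half_mul] at h'
    have hb : v - v' + (P.half * P.D ξ₀ (P.D ξ₀ f) + P.D ξ₀ f * (P.half * P.D ξ₀ f) - P.half * P.D ξ₀ f * (P.half * P.D ξ₀ f)) • η₁ ∈ P.V :=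
      P.V.add_mem (P.V.sub_mem hv hv') (P.V.smul_mem _ hη₁)
    have := (hξ₀.disjoint hb (a := s' - (s + P.D ξ₀ (P.D η₁ f) + P.D (W.lift ξ₀ η₁) f
        - P.D (W.conn.cov ξ₀ η₁) f - P.D ξ₀ f * P.D η₁ f)) (by
      linear_combination (norm := module) -h'
        - hh • (P.D ξ₀ f • W.lift ξ₀ η₁ - (P.D ξ₀ f * P.D η₁ f) • ξ₀))).1
    linear_combination this - hD
  have hsk : P.lie η₁ ξ₀ = -(W.conn.cov ξ₀ η₁ + W.lift ξ₀ η₁) := by rw [P.lie_skew, hlie]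
  rw [hz _ (W'.parV _ _ hη₂), hz _ hη₂, change_V hξ₀ hu hDu W W' hη₁ hη₂, hladd, hladd,
    hlsm _ _ hη₁, hlsm _ _ hη₂, P.lie_sub_right, P.lie_sub_right, P.lie_smul_right,
    P.lie_smul_right, ht, hsk, ← htor, cov_sub_left, cov_sub_left, W'.conn.smul_left,
    W'.conn.smul_left, change_E hξ₀ hu hDu W W' hη₁, change_V hξ₀ hu hDu W W' hη₂ hη₁, hs,
    P.D_half_mul] at ht'
  -- Comparing `V`-components of the two expressions for `[η₁, ζ₂]`.
  have hb := P.V.sub_mem hZ' (P.V.add_mem (P.V.add_mem hZ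
    (P.V.smul_mem (P.D ξ₀ f * P.D η₁ f - P.D (W.lift ξ₀ η₁) f) hη₂))
    (P.V.smul_mem (P.half * P.D ξ₀ f * P.D η₂ f) hη₁))
  refine sub_eq_zero.1 (hξ₀.disjoint hb (a := P.D η₁ (P.D η₂ f) + t - t' + P.D η₁ f * P.D η₂ f - P.D (W.conn.cov η₁ η₂ + P.D η₂ f • η₁ + P.D η₁ f • η₂) f) ?_).2
  linear_combination (norm := module) ht'
    + hh • ((P.D ξ₀ f * P.D η₁ f - P.D (W.lift ξ₀ η₁) f) • η₂)

/-! ### Traces -/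

/-- For a form `ω` normalized on the spanning family `fr`, the trace of the rank one endomorphism
`α ⊗ η` of `V` is `α η`. -/
theorem sum_update_rank_one {R N : Type*} [CommRing R] [AddCommGroup N] [Module R N] {n : ℕ}
    (ω : N [⋀^Fin n]→ₗ[R] R) (fr : Fin n → N) (hω : ω fr = 1) (α : N →ₗ[R] R) (η : N)
    (c : Fin n → R) (hη : η = ∑ i, c i • fr i) :
    ∑ i, ω (Function.update fr i (α (fr i) • η)) = α η := by
  have hi : ∀ i, ω (Function.update fr i η) = c i := by
    intro i
    rw [hη, ω.map_update_sum, Finset.sum_eq_single i]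
    · rw [ω.map_update_smul, Function.update_eq_self, hω, smul_eq_mul, mul_one]
    · intro j _ hji
      rw [ω.map_update_smul, ω.map_update_self fr hji.symm, smul_zero]
    · simp
  simp only [ω.map_update_smul, hi, smul_eq_mul]
  rw [hη, map_sum]
  simp [mul_comm]

/-- If the connections on `V` in direction `ψ` differ by `α ⊗ η + k·id`, the induced connections
on the density bundle differ by `m` with `(n+2)m = df(ψ) + α(η) + nk`. -/
theorem density_of_change {n : ℕ}
    (W : WeylStructure P ξ₀) (W' : WeylStructure P ξ₁)
    {Lb : Type} [AddCommGroup Lb] [Module P.C Lb]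
    (covL covL' : ModConn P.toVFCalc Lb)
    (ℓ : Lb) (hℓspan : ∀ ρ : Lb, ∃ g : P.C, ρ = g • ℓ)
    (ω : ↥P.V [⋀^Fin n]→ₗ[P.C] P.C) (fr : Fin n → ↥P.V)
    (hfr : ∀ η' ∈ P.V, ∃ c : Fin n → P.C, η' = ∑ i, c i • ((fr i : P.X)))
    (hω : ω fr = 1)
    (hcovL : ∀ ψ : P.X, ((n + 2 : ℕ) : P.C) • covL.cov ψ ℓ
      = (P.D ψ (ω fr) - ∑ i, ω (Function.update fr i (W.covV ψ (fr i)))) • ℓ)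
    (hcovL' : ∀ ψ : P.X, ((n + 2 : ℕ) : P.C) • covL'.cov ψ ℓ
      = (-P.D ψ f + P.D ψ (ω fr)
          - ∑ i, ω (Function.update fr i (W'.covV ψ (fr i)))) • ℓ)
    (ψ : P.X) (α : P.V →ₗ[P.C] P.C) (η : P.V) (k m : P.C)
    (hch : ∀ η₁ : P.V, W'.conn.cov ψ η₁ = W.conn.cov ψ η₁ + α η₁ • (η : P.X) + k • (η₁ : P.X))
    (hm : ((n + 2 : ℕ) : P.C) * m = P.D ψ f + α η + n * k) (ρ : Lb) :
    covL'.cov ψ ρ = covL.cov ψ ρ - m • ρ := by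
  obtain ⟨c, hc⟩ := hfr η η.2
  have hη : η = ∑ i, c i • fr i := by
    apply Subtype.ext; rw [hc]; simp
  have hsum : ∑ i, ω (Function.update fr i (W'.covV ψ (fr i)))
      = ∑ i, ω (Function.update fr i (W.covV ψ (fr i))) + α η + n * k := by
    have : ∀ i, W'.covV ψ (fr i) = W.covV ψ (fr i) + α (fr i) • η + k • fr i :=
      fun i => Subtype.ext (hch (fr i))
    simp only [this, ω.map_update_add, Finset.sum_add_distrib]
    rw [sum_update_rank_one ω fr hω α η c hη]
    simp [ω.map_update_smul, hω]
  have h := hcovL ψ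
  have h' := hcovL' ψ
  rw [hsum] at h'
  have key : ((n + 2 : ℕ) : P.C) • covL'.cov ψ ℓ
      = ((n + 2 : ℕ) : P.C) • (covL.cov ψ ℓ - m • ℓ) := by
    rw [smul_sub, smul_smul, hm, h, h']; module
  have hn : IsUnit ((n + 2 : ℕ) : P.C) := by
    have h0 : IsUnit ((n + 2 : ℕ) : ℝ) := (Nat.cast_ne_zero.2 (by omega)).isUnit
    simpa only [map_natCast] using h0.map (algebraMap ℝ P.C)
  have hℓ := hn.smul_left_cancel.1 key
  obtain ⟨g, rfl⟩ := hℓspan ρ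
  rw [covL'.leibniz, covL.leibniz, hℓ]; module

end Weyl

/-- Proposition 4.3 of the paper.  Let `(M,E,V)` be a path geometry
(`V` of rank `n`), `ξ₀ ∈ Γ(E)` a scale and `ξ̂₀ := e^f ξ₀` (with `e^f` modelled as an
invertible `u ∈ C` satisfying `d(u) = u·df`), with associated Weyl structures `W`, `Ŵ`.
The density bundle `L := (E ⊗ ΛⁿV*)^{2/(2n+4)}` is modelled as a line bundle `Lb`
(a free rank one `C`-module, with basis `ℓ` corresponding to `(ξ₀ ⊗ ω)^{2/(2n+4)}`,
where `ω` is a trivializing section of `ΛⁿV*` with `ω(η₁,…,ηₙ) = 1` for a frame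
`η₁,…,ηₙ` of `V`).  The Weyl connections induced on `Lb` are characterized by
`(n+2) ∇^L_ψ ℓ = (θ_E(ψ) + (∇_ψ ω)(η₁,…,ηₙ)) ℓ`, where `θ_E` is the connection form
of the Weyl connection on `E` with respect to `ξ₀` (so `θ_E = 0` for `W` since
`∇ξ₀ = 0`, and `θ̂_E(ψ) = −df(ψ)` for `Ŵ` since `∇̂ ξ₀ = −df ⊗ ξ₀`), and
`(∇_ψ ω)(η₁,…,ηₙ) = ψ·(ω(η₁,…,ηₙ)) − Σᵢ ω(η₁,…,∇_ψ ηᵢ,…,ηₙ)`.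
Then for `ξ ∈ Γ(E)`, `η ∈ Γ(V)`, `ζ := ι(𝓛(ξ,η))` and `ρ ∈ Γ(L)`:
`∇̂_ξ ρ = ∇_ξ ρ − ½ df(ξ) ρ`, `∇̂_η ρ = ∇_η ρ − df(η) ρ`, and
`∇̂_ζ ρ = ∇_ζ ρ − ½ df(ξ) df(η) ρ`. -/
theorem change_of_scale_density (n : ℕ) (P : PathGeometry) (ξ₀ : P.X)
    (hξ₀ : P.IsScale ξ₀)
    (u f : P.C) (hu : IsUnit u) (hDu : ∀ ψ : P.X, P.D ψ u = u * P.D ψ f)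
    (W : WeylStructure P ξ₀) (W' : WeylStructure P (u • ξ₀))
    (Lb : Type) [AddCommGroup Lb] [Module P.C Lb]
    (covL covL' : ModConn P.toVFCalc Lb)
    (ℓ : Lb) (hℓspan : ∀ ρ : Lb, ∃ g : P.C, ρ = g • ℓ)
    (hℓbasis : ∀ g : P.C, g • ℓ = 0 → g = 0)
    (ω : ↥P.V [⋀^Fin n]→ₗ[P.C] P.C) (fr : Fin n → ↥P.V)
    (hfr : ∀ η' ∈ P.V, ∃ c : Fin n → P.C, η' = ∑ i, c i • ((fr i : P.X)))
    (hω : ω fr = 1)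
    (hcovL : ∀ ψ : P.X, ((n + 2 : ℕ) : P.C) • covL.cov ψ ℓ
      = (P.D ψ (ω fr) - ∑ i, ω (Function.update fr i (W.covV ψ (fr i)))) • ℓ)
    (hcovL' : ∀ ψ : P.X, ((n + 2 : ℕ) : P.C) • covL'.cov ψ ℓ
      = (-P.D ψ f + P.D ψ (ω fr)
          - ∑ i, ω (Function.update fr i (W'.covV ψ (fr i)))) • ℓ) :
    ∀ ξ ∈ P.E, ∀ η ∈ P.V, ∀ ρ : Lb,
      covL'.cov ξ ρ = covL.cov ξ ρ - (P.half * P.D ξ f) • ρ ∧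
      covL'.cov η ρ = covL.cov η ρ - (P.D η f) • ρ ∧
      covL'.cov (W.ι (P.levi ξ η)) ρ
        = covL.cov (W.ι (P.levi ξ η)) ρ - (P.half * P.D ξ f * P.D η f) • ρ := by
  intro ξ hξ η hη ρ
  have hh := P.two_half
  have key := density_of_change W W' covL covL' ℓ hℓspan ω fr hfr hω hcovL hcovL'
  -- The rank one parts of `change_V` and `change_lift_dir` are `dV ⊗ η` and
  -- `(df(ξ₀) • dV - dZ) ⊗ η`.
  let dV : P.V →ₗ[P.C] P.C :=
    { toFun := fun v => P.D v f
      map_add' := fun a b => P.D_add_left a b f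
      map_smul' := fun g a => P.D_smul_left g a f }
  let dZ : P.V →ₗ[P.C] P.C :=
    { toFun := fun v => P.D (W.lift ξ₀ v) f
      map_add' := fun a b => by
        simp [WeylStructure.lift, PathGeometry.levi_add, P.D_add_left]
      map_smul' := fun g a => by
        simp [WeylStructure.lift, PathGeometry.levi_smul a.2, P.D_smul_left] }
  obtain ⟨g, rfl⟩ := hξ₀.span ξ hξ
  refine ⟨?_, ?_, ?_⟩
  · have := key ξ₀ 0 0 (P.half * P.D ξ₀ f) (P.half * P.D ξ₀ f)
      (fun η₁ => by
        rw [change_E hξ₀ hu hDu W W' η₁.2]; simp)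
      (by push_cast; simp only [LinearMap.zero_apply]; linear_combination P.D ξ₀ f * hh) ρ
    rw [covL'.smul_left, covL.smul_left, this, P.D_smul_left]
    module
  · exact key η dV ⟨η, hη⟩ (P.D η f) (P.D η f)
      (fun η₁ => change_V hξ₀ hu hDu W W' hη η₁.2)
      (by
        push_cast
        change _ = P.D η f + P.D η f + _
        ring) ρ
  · have := key (W.lift ξ₀ η) (P.D ξ₀ f • dV - dZ) ⟨η, hη⟩ (P.half * P.D ξ₀ f * P.D η f)
      (P.half * P.D ξ₀ f * P.D η f)
      (fun η₁ => change_lift_dir hξ₀ hu hDu W W' η₁.2 hη)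
      (by
        push_cast
        change _ = P.D (W.lift ξ₀ η) f + (P.D ξ₀ f * P.D η f - P.D (W.lift ξ₀ η) f) + _
        linear_combination P.D ξ₀ f * P.D η f * hh) ρ
    rw [PathGeometry.levi_smul_left hξ₀.mem, map_smul, covL'.smul_left, covL.smul_left,
      P.D_smul_left]
    change g • covL'.cov (W.lift ξ₀ η) ρ = g • covL.cov (W.lift ξ₀ η) ρ - _
    rw [this]
    module
end

section
/- Let (M,E,V) be a path geometry, ξ₀ ∈ Γ(E) a scale with associated Weyl connection ∇ and Schouten tensor P, and let P^{EE} denote the restriction of P to E × E, so P^{EE}(ξ₁,ξ₂) = −(1/n) tr_V(τ(ξ₁, ι(𝓛(ξ₂, · )))). Define the second-order operator on sections of the density bundle L by (Dρ)(ξ₁,ξ₂) := ∇_{ξ₁}∇_{ξ₂}ρ − ∇_{∇_{ξ₁}ξ₂}ρ − P^{EE}(ξ₁,ξ₂)ρ for ξ₁,ξ₂ ∈ Γ(E). Then: (a) under the change of scale ξ̂₀ = e^f ξ₀, the expression ((∇̂_E)²ρ)(ξ₁,ξ₂) := ∇̂_{ξ₁}∇̂_{ξ₂}ρ − ∇̂_{∇̂_{ξ₁}ξ₂}ρ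 equals ((∇_E)²ρ)(ξ₁,ξ₂) − ½(∇_{ξ₁}df)(ξ₂)ρ − ¼ df(ξ₁)df(ξ₂)ρ; (b) consequently D : Γ(L) → Γ(S²E* ⊗ L) is independent of the choice of scale, i.e. an invariant differential operator of order two. -/
/-!
The scale trivializes the line bundle `E` and is parallel, so on `E` both Weyl connections are
plain differentiation of a coefficient, with respect to `ξ₀` and `e^f ξ₀` respectively. Comparing
them gives `∇̂_{ξ₁} ξ₂ = ∇_{ξ₁} ξ₂ - df(ξ₁) ξ₂` for `ξ₂ ∈ Γ(E)`
(`WeylStructure.cov_change_scale`). Expanding `∇̂_{ξ₁} ∇̂_{ξ₂} ρ - ∇̂_{∇̂_{ξ₁} ξ₂} ρ` with the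
transformation law of `L`, the only first-order terms left over are
`½ (df(ξ₁) ∇_{ξ₂} ρ - df(ξ₂) ∇_{ξ₁} ρ)`. This is skew in `ξ₁, ξ₂` and `E` has rank one, so it
vanishes. The zeroth-order terms that remain are exactly the change of the Schouten
component `P^{EE}`, which yields the invariance of the operator.
-/

/-!
An algebraic model of the smooth calculus on a smooth manifold `M`:
`C` plays the role of the algebra `C^∞(M,ℝ)` of smooth functions and `X` plays the
role of the `C^∞(M,ℝ)`-module `𝔛(M)` of smooth vector fields, together with the Lie
bracket of vector fields and the derivative of functions along vector fields
(i.e. a Lie–Rinehart algebra over `ℝ`).  Distributions (smooth subbundles of `TM`)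
are modelled as `C`-submodules of `X`, linear connections on `TM` as operators
`X → X → X` with the usual tensoriality and Leibniz properties, and one-forms as
`C`-linear maps `X →ₗ[C] C`.
-/

open scoped TensorProduct

/-- the constant function `¼` -/
noncomputable def PathGeometry.quarter (P : PathGeometry) : P.C := algebraMap ℝ P.C (1/4)

theorem ModConn.cov_sub {P : VFCalc} {Lb : Type} [AddCommGroup Lb] [Module P.C Lb]
    (cn : ModConn P Lb) (ψ : P.X) (ρ₁ ρ₂ : Lb) :
    cn.cov ψ (ρ₁ - ρ₂) = cn.cov ψ ρ₁ - cn.cov ψ ρ₂ := by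
  rw [eq_sub_iff_add_eq, ← cn.add_right, sub_add_cancel]

theorem ModConn.cov_sub_left {P : VFCalc} {Lb : Type} [AddCommGroup Lb] [Module P.C Lb]
    (cn : ModConn P Lb) (ψ₁ ψ₂ : P.X) (ρ : Lb) :
    cn.cov (ψ₁ - ψ₂) ρ = cn.cov ψ₁ ρ - cn.cov ψ₂ ρ := by
  rw [eq_sub_iff_add_eq, ← cn.add_left, sub_add_cancel]

theorem VFCalc.D_sub_left (P : VFCalc) (ψ₁ ψ₂ : P.X) (f : P.C) :
    P.D (ψ₁ - ψ₂) f = P.D ψ₁ f - P.D ψ₂ f := by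
  rw [eq_sub_iff_add_eq, ← P.D_add_left, sub_add_cancel]

theorem PathGeometry.D_half_mul_s18 (P : PathGeometry) (ψ : P.X) (g : P.C) :
    P.D ψ (P.half * g) = P.half * P.D ψ g := by
  rw [P.D_mul_right, PathGeometry.half, P.D_algebraMap, mul_zero, add_zero]

theorem PathGeometry.half_add_half (P : PathGeometry) : P.half + P.half = 1 := by
  rw [PathGeometry.half, ← map_add]; norm_num

theorem PathGeometry.half_mul_half (P : PathGeometry) : P.half * P.half = P.quarter := by
  rw [PathGeometry.half, PathGeometry.quarter, ← map_mul]; norm_num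

/-- A Weyl connection differentiates the coefficient with respect to its own scale. -/
theorem WeylStructure.cov_smul_scale {P : PathGeometry} {ξ₀ : P.X} (W : WeylStructure P ξ₀)
    (ψ : P.X) (b : P.C) : W.conn.cov ψ (b • ξ₀) = P.D ψ b • ξ₀ := by
  rw [W.conn.leibniz, W.parScale, smul_zero, zero_add]

/-- The change of the Weyl connection on `E` under `ξ̂₀ = e^f ξ₀`. -/
theorem WeylStructure.cov_change_scale {P : PathGeometry} {ξ₀ : P.X} {u f : P.C} (hu : IsUnit u)
    (hDu : ∀ ψ : P.X, P.D ψ u = u * P.D ψ f)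
    (W : WeylStructure P ξ₀) (W' : WeylStructure P (u • ξ₀)) (ψ : P.X) (b : P.C) :
    W'.conn.cov ψ (b • ξ₀) = W.conn.cov ψ (b • ξ₀) - P.D ψ f • (b • ξ₀) := by
  obtain ⟨c, rfl⟩ : ∃ c, b = c * u := by
    obtain ⟨v, hv⟩ := hu.exists_left_inv
    exact ⟨b * v, by rw [mul_assoc, hv, mul_one]⟩
  rw [W.cov_smul_scale, mul_smul, W'.cov_smul_scale, P.D_mul_right, hDu]
  module

/-- the example at the end of Section 4.6 of the paper.  Let
`(M,E,V)` be a path geometry, `ξ₀ ∈ Γ(E)` a scale with Weyl structure `W` (connection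
`∇` and projection `Π_V`), and let `P^{EE}` be the `E×E`-component of the Schouten
tensor, `P^{EE}(ξ₁,ξ₂) = −(1/n)·tr_V(τ(ξ₁, ι(𝓛(ξ₂,·))))` (where the trace is taken of
the endomorphism `η ↦ Π_V(τ(ξ₁, ι(𝓛(ξ₂,η))))` of `V`).  Let `ξ̂₀ = e^f ξ₀` be a second
scale (`e^f` modelled as an invertible `u` with `d(u) = u·df`) with Weyl structure `Ŵ`
and Schouten component `P̂^{EE}`, which transforms by
`P̂^{EE}(ξ₁,ξ₂) = P^{EE}(ξ₁,ξ₂) − ½(∇_{ξ₁}df)(ξ₂) − ¼ df(ξ₁)df(ξ₂)`.  Let `Lb` model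
the density bundle `L` with induced Weyl connections `∇^L`, `∇̂^L` transforming by
`∇̂^L_ξ ρ = ∇^L_ξ ρ − ½ df(ξ) ρ` for `ξ ∈ Γ(E)`.  Define
`(Dρ)(ξ₁,ξ₂) := ∇_{ξ₁}∇_{ξ₂}ρ − ∇_{∇_{ξ₁}ξ₂}ρ − P^{EE}(ξ₁,ξ₂)ρ`.  Then:
(a) `((∇̂_E)²ρ)(ξ₁,ξ₂) = ((∇_E)²ρ)(ξ₁,ξ₂) − ½(∇_{ξ₁}df)(ξ₂)ρ − ¼ df(ξ₁)df(ξ₂)ρ`;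
(b) consequently `D` is independent of the choice of scale, i.e. it is an invariant
differential operator `Γ(L) → Γ(S²E*⊗L)` of order two. -/
theorem invariant_operator_on_densities (n : ℕ) (P : PathGeometry) (ξ₀ : P.X)
    (hξ₀ : P.IsScale ξ₀)
    (u f : P.C) (hu : IsUnit u) (hDu : ∀ ψ : P.X, P.D ψ u = u * P.D ψ f)
    (W : WeylStructure P ξ₀) (W' : WeylStructure P (u • ξ₀))
    (PiV : P.X →ₗ[P.C] P.X) (hPiVmem : ∀ ψ, PiV ψ ∈ P.V)
    (hPiV : ∀ ψ : P.X, ∃ ξ ∈ P.E, ψ - PiV ψ - W.ι (P.q ψ) = ξ)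
    (PEE PEE' : P.X → P.X → P.C)
    (hPEE : ∀ ξ₁ ∈ P.E, ∀ ξ₂ ∈ P.E, ∀ T : ↥P.V →ₗ[P.C] ↥P.V,
      (∀ v : ↥P.V, (T v : P.X) = PiV (W.conn.torsion ξ₁ (W.ι (P.levi ξ₂ (v : P.X))))) →
      (n : P.C) * PEE ξ₁ ξ₂ = -(LinearMap.trace P.C ↥P.V T))
    (hPEE' : ∀ ξ₁ ∈ P.E, ∀ ξ₂ ∈ P.E,
      PEE' ξ₁ ξ₂ = PEE ξ₁ ξ₂
        - P.half * (P.D ξ₁ (P.D ξ₂ f) - P.D (W.conn.cov ξ₁ ξ₂) f)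
        - P.quarter * (P.D ξ₁ f * P.D ξ₂ f))
    (Lb : Type) [AddCommGroup Lb] [Module P.C Lb]
    (covL covL' : ModConn P.toVFCalc Lb)
    (hLtrans : ∀ ξ ∈ P.E, ∀ ρ : Lb,
      covL'.cov ξ ρ = covL.cov ξ ρ - (P.half * P.D ξ f) • ρ) :
    (∀ ξ₁ ∈ P.E, ∀ ξ₂ ∈ P.E, ∀ ρ : Lb,
      covL'.cov ξ₁ (covL'.cov ξ₂ ρ) - covL'.cov (W'.conn.cov ξ₁ ξ₂) ρ
        = covL.cov ξ₁ (covL.cov ξ₂ ρ) - covL.cov (W.conn.cov ξ₁ ξ₂) ρ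
          - (P.half * (P.D ξ₁ (P.D ξ₂ f) - P.D (W.conn.cov ξ₁ ξ₂) f)) • ρ
          - (P.quarter * (P.D ξ₁ f * P.D ξ₂ f)) • ρ) ∧
    (∀ ξ₁ ∈ P.E, ∀ ξ₂ ∈ P.E, ∀ ρ : Lb,
      covL'.cov ξ₁ (covL'.cov ξ₂ ρ) - covL'.cov (W'.conn.cov ξ₁ ξ₂) ρ
          - PEE' ξ₁ ξ₂ • ρ
        = covL.cov ξ₁ (covL.cov ξ₂ ρ) - covL.cov (W.conn.cov ξ₁ ξ₂) ρ
          - PEE ξ₁ ξ₂ • ρ) := by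
  have key : ∀ ξ₁ ∈ P.E, ∀ ξ₂ ∈ P.E, ∀ ρ : Lb,
      covL'.cov ξ₁ (covL'.cov ξ₂ ρ) - covL'.cov (W'.conn.cov ξ₁ ξ₂) ρ
        = covL.cov ξ₁ (covL.cov ξ₂ ρ) - covL.cov (W.conn.cov ξ₁ ξ₂) ρ
          - (P.half * (P.D ξ₁ (P.D ξ₂ f) - P.D (W.conn.cov ξ₁ ξ₂) f)) • ρ
          - (P.quarter * (P.D ξ₁ f * P.D ξ₂ f)) • ρ := by
    intro ξ₁ h₁ ξ₂ h₂ ρ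
    have hcov : W'.conn.cov ξ₁ ξ₂ = W.conn.cov ξ₁ ξ₂ - P.D ξ₁ f • ξ₂ := by
      obtain ⟨b, rfl⟩ := hξ₀.span ξ₂ h₂
      exact W.cov_change_scale hu hDu W' ξ₁ b
    -- `df ⊗ ∇ρ` is symmetric on `E × E` because `E` has rank one.
    have hsymm : P.D ξ₁ f • covL.cov ξ₂ ρ = P.D ξ₂ f • covL.cov ξ₁ ρ := by
      obtain ⟨a, rfl⟩ := hξ₀.span ξ₁ h₁
      obtain ⟨b, rfl⟩ := hξ₀.span ξ₂ h₂
      rw [P.D_smul_left, P.D_smul_left, covL.smul_left, covL.smul_left]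
      module
    rw [hLtrans _ (W'.parE ξ₁ ξ₂ h₂), hLtrans ξ₁ h₁, hLtrans ξ₂ h₂, hcov, covL.cov_sub,
      covL.leibniz, P.D_half_mul_s18, covL.cov_sub_left, covL.smul_left, P.D_sub_left,
      P.D_smul_left, ← P.half_mul_half]
    generalize W.conn.cov ξ₁ ξ₂ = χ
    -- Replacing `1` by `½ + ½` in the coefficient of `df(ξ₁) ∇_{ξ₂} ρ` and of `df(ξ₁) df(ξ₂) ρ`
    -- makes the remaining identity one of polynomials in `½`.
    have hA := congrArg (fun c => (c * P.D ξ₁ f) • covL.cov ξ₂ ρ) P.half_add_half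
    have hB := congrArg (fun c => (c * (P.half * (P.D ξ₁ f * P.D ξ₂ f))) • ρ) P.half_add_half
    simp only [one_mul] at hA hB
    linear_combination (norm := module) P.half • hsymm - hA + hB
  refine ⟨key, fun ξ₁ h₁ ξ₂ h₂ ρ => ?_⟩
  rw [key ξ₁ h₁ ξ₂ h₂ ρ, hPEE' ξ₁ h₁ ξ₂ h₂]
  module
end
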